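/- arXiv:1609.01951 — 11 statements merged into one kernel-verified Lean document; each statement's English description precedes it below -/
import Mathlib

section
/- Let a > 0, N > 0, φ ∈ (0,1], γ > 0, σ ≥ 0, and 0 < p_a ≤ aγ. Define f(m) = a N φ · γ e^{−γσ} · (1 − e^{−m/(Nφ)}) − p_a m for m ∈ [0,∞). If σ ≤ (1/γ) ln(aγ/p_a), then f attains its maximum over [0,∞) at the unique point m* = N φ (ln(aγ/p_a) − γσ). If σ > (1/γ) ln(aγ/p_a), then f attains its maximum over [0,∞) at the unique point m* = 0. -/
/-!
With `K = N φ`, `t = m / K` and `L = log (a γ / pa) - γ σ`, the identity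
`a γ exp (-γ σ) = pa exp L` turns the payoff into `K pa (exp L (1 - exp (-t)) - t)`.
Both regimes then follow from the strict tangent-line inequality `x + 1 < exp x` for `x ≠ 0`:
applied at `x = L - t` it shows that `t = L` is the strict global maximiser on the whole line,
and applied at `x = -t`, together with `exp L < 1`, it shows that the payoff is negative for
`t > 0` when `L < 0`.
-/

theorem stmt1 (a N φ γ σ pa : ℝ) (ha : 0 < a) (hN : 0 < N)
    (hφ : φ ∈ Set.Ioc (0 : ℝ) 1) (hγ : 0 < γ) (hσ : 0 ≤ σ)
    (hpa : 0 < pa) (hpa' : pa ≤ a * γ) :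
    let f : ℝ → ℝ := fun m =>
      a * N * φ * (γ * Real.exp (-(γ * σ))) * (1 - Real.exp (-(m / (N * φ)))) - pa * m
    let mStar : ℝ := N * φ * (Real.log (a * γ / pa) - γ * σ)
    (σ ≤ (1 / γ) * Real.log (a * γ / pa) →
      0 ≤ mStar ∧
      (∀ m : ℝ, 0 ≤ m → f m ≤ f mStar) ∧
      (∀ m : ℝ, 0 ≤ m → f m = f mStar → m = mStar)) ∧
    ((1 / γ) * Real.log (a * γ / pa) < σ →
      (∀ m : ℝ, 0 ≤ m → f m ≤ f 0) ∧
      (∀ m : ℝ, 0 ≤ m → f m = f 0 → m = 0)) := by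
  intro f mStar
  have hK : 0 < N * φ := mul_pos hN hφ.1
  set L := Real.log (a * γ / pa) - γ * σ with hL
  have hexp : pa * Real.exp L = a * (γ * Real.exp (-(γ * σ))) := by
    rw [hL, sub_eq_add_neg, Real.exp_add, Real.exp_log (by positivity)]
    field_simp
  have hf : ∀ t, f (N * φ * t) = N * φ * pa * (Real.exp L * (1 - Real.exp (-t)) - t) := by
    intro t
    have ht : N * φ * t / (N * φ) = t := mul_div_cancel_left₀ t hK.ne'
    simp only [f, ht]
    linear_combination -(N * φ * (1 - Real.exp (-t))) * hexp
  have hm : ∀ m, m = N * φ * (m / (N * φ)) := fun m => by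
    rw [mul_div_cancel₀ m hK.ne']
  have hKp : 0 < N * φ * pa := mul_pos hK hpa
  have hlog : γ * ((1 / γ) * Real.log (a * γ / pa)) = Real.log (a * γ / pa) := by field_simp
  refine ⟨fun h => ?_, fun h => ?_⟩
  · have hL0 : 0 ≤ L := by
      have := mul_le_mul_of_nonneg_left h hγ.le
      rw [hlog] at this
      linarith
    have key : ∀ m, m ≠ mStar → f m < f mStar := by
      intro m hne
      have hne' : L - m / (N * φ) ≠ 0 := by
        intro h0
        apply hne
        rw [hm m, ← sub_eq_zero.mp h0]
      have h1 := Real.add_one_lt_exp hne'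
      rw [hm m]
      change _ < f (N * φ * L)
      rw [hf, hf]
      refine mul_lt_mul_of_pos_left ?_ hKp
      have h2 : Real.exp L * Real.exp (-L) = 1 := by rw [← Real.exp_add]; simp
      rw [sub_eq_add_neg L, Real.exp_add] at h1
      linarith
    refine ⟨mul_nonneg hK.le hL0, fun m _ => ?_, fun m _ heq => ?_⟩
    · rcases eq_or_ne m mStar with rfl | hne
      · exact le_rfl
      · exact (key m hne).le
    · by_contra hne
      exact (key m hne).ne heq
  · have hL0 : L < 0 := by
      have := mul_lt_mul_of_pos_left h hγ
      rw [hlog] at this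
      linarith
    have key : ∀ m, 0 ≤ m → m ≠ 0 → f m < f 0 := by
      intro m hm0 hne
      have ht : 0 < m / (N * φ) := div_pos (lt_of_le_of_ne hm0 hne.symm) hK
      have h1 := Real.add_one_lt_exp (neg_ne_zero.mpr ht.ne')
      have h2 : Real.exp L < 1 := (Real.exp_lt_one_iff).2 hL0
      have h3 : Real.exp (-(m / (N * φ))) < 1 := (Real.exp_lt_one_iff).2 (neg_neg_of_pos ht)
      have h0 : f 0 = 0 := by simp [f]
      rw [h0, hm m, hf]
      refine mul_neg_of_pos_of_neg hKp ?_
      nlinarith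
    refine ⟨fun m hm0 => ?_, fun m hm0 heq => ?_⟩
    · rcases eq_or_ne m 0 with rfl | hne
      · exact le_rfl
      · exact (key m hm0 hne).le
    · by_contra hne
      exact (key m hm0 hne).ne heq
end

section
/- Let a > 0, γ ∈ (0,1], λ > 0, M > 0, σ_max > 0, N > 0, φ ∈ (0,1], and δ ∈ [0,1). Define σ_T(p_a) = min{ (1/γ) ln(aγ/p_a), σ_max } and Q(p_a) = (M N φ / σ_max) ( ln(aγ/p_a) σ_T(p_a) − (γ/2) σ_T(p_a)² ) for p_a ∈ (0, aγ]. Then the function p_a ↦ (1−δ) p_a Q(p_a) attains its maximum over the feasible set { p_a ∈ (0, aγ] : Q(p_a) ≤ λ N φ } at the unique point p_a* given by: p_a* = aγ e^{−√(2λγσ_max/M)} if λ/M ≤ min{ γσ_max/2, 1, 2/(γσ_max) }; p_a* = aγ e^{−(γσ_max/2 + λ/M)} if γσ_max/2 < λ/M ≤ 1; p_a* = aγ e^{−(γσ_max/2 + 1)} if γσ_max/2 < 1 < λ/M; and p_a* = aγ e^{−2} in all other cases. -/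
/-!
Substitute `p = a γ e^{-x}` with `x ≥ 0` and put `c = γ σmax`, `L = lam / M`. Up to positive
constants, the demand `Q` becomes `g(x) = x t - t² / 2` with `t = min x c`, so that `g(x) = x² / 2`
for `x ≤ c` and `g(x) = c (x - c / 2)` for `x ≥ c`; the revenue becomes `e^{-x} g(x)` and the
capacity constraint becomes `g(x) ≤ L c`.

On both pieces the revenue is an increasing function of some `z e^{-z}` (with `z = x / 2`,
respectively `z = x - c / 2`), and `z e^{-z}` strictly increases on `[0, 1]` and strictly decreases
on `[1, ∞)`. Hence the revenue is strictly unimodal, with peak at `2` if `c ≥ 2` and at `1 + c / 2`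
if `c < 2`. Since `g` is strictly increasing, the constraint reads `x ≤ x_L`, where `x_L = √(2 L c)`
if `L ≤ c / 2` and `x_L = c / 2 + L` otherwise, so the unique optimum is the smaller of the peak
and `x_L` (`normalized_optimum`).
-/

/-- Normalized demand as a function of `x = log (a γ / p)`, with `c = γ σmax`. -/
noncomputable def normDemand (c x : ℝ) : ℝ := x * min x c - (min x c) ^ 2 / 2

/-- The optimal `x = log (a γ / p)`, in terms of `c = γ σmax` and `L = lam / M`. -/
noncomputable def optLog (c L : ℝ) : ℝ :=
  if L ≤ min (c / 2) (min 1 (2 / c)) then Real.sqrt (2 * L * c)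
  else if c / 2 < L ∧ L ≤ 1 then c / 2 + L
  else if c / 2 < 1 ∧ 1 < L then c / 2 + 1
  else 2

lemma normDemand_of_le {c x : ℝ} (h : x ≤ c) : normDemand c x = x ^ 2 / 2 := by
  rw [normDemand, min_eq_left h]; ring

lemma normDemand_of_ge {c x : ℝ} (h : c ≤ x) : normDemand c x = c * (x - c / 2) := by
  rw [normDemand, min_eq_right h]; ring

lemma mul_exp_neg_lt_of_le_one {y z : ℝ} (hy : 0 ≤ y) (hyz : y < z) (hz : z ≤ 1) :
    y * Real.exp (-y) < z * Real.exp (-z) := by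
  have h1 : -(z - y) + 1 < Real.exp (-(z - y)) := Real.add_one_lt_exp (by linarith)
  have h2 : Real.exp (-z) = Real.exp (-(z - y)) * Real.exp (-y) := by
    rw [← Real.exp_add]; ring_nf
  rw [h2, ← mul_assoc]
  refine mul_lt_mul_of_pos_right ?_ (Real.exp_pos _)
  nlinarith [mul_lt_mul_of_pos_left h1 (hy.trans_lt hyz),
    mul_nonneg (sub_nonneg.2 hyz.le) (sub_nonneg.2 hz)]

lemma mul_exp_neg_lt_of_one_le {y z : ℝ} (hy : 1 ≤ y) (hyz : y < z) :
    z * Real.exp (-z) < y * Real.exp (-y) := by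
  have h1 : (z - y) + 1 < Real.exp (z - y) := Real.add_one_lt_exp (by linarith)
  have h2 : Real.exp (-y) = Real.exp (z - y) * Real.exp (-z) := by
    rw [← Real.exp_add]; ring_nf
  rw [h2, ← mul_assoc]
  refine mul_lt_mul_of_pos_right ?_ (Real.exp_pos _)
  nlinarith [mul_lt_mul_of_pos_left h1 (zero_lt_one.trans_le hy),
    mul_nonneg (sub_nonneg.2 hyz.le) (sub_nonneg.2 hy)]

lemma revenue_of_le {c x : ℝ} (h : x ≤ c) :
    Real.exp (-x) * normDemand c x = 2 * (x / 2 * Real.exp (-(x / 2))) ^ 2 := by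
  have : Real.exp (-x) = Real.exp (-(x / 2)) ^ 2 := by
    rw [← Real.exp_nat_mul]; congr 1; push_cast; ring
  rw [normDemand_of_le h, this]; ring

lemma revenue_of_ge {c x : ℝ} (h : c ≤ x) :
    Real.exp (-x) * normDemand c x =
      c * Real.exp (-(c / 2)) * ((x - c / 2) * Real.exp (-(x - c / 2))) := by
  have : Real.exp (-x) = Real.exp (-(c / 2)) * Real.exp (-(x - c / 2)) := by
    rw [← Real.exp_add]; ring_nf
  rw [normDemand_of_ge h, this]; ring

lemma revenue_lt_quad {c x y : ℝ} (hx : 0 ≤ x) (hxy : x < y) (hyc : y ≤ c) (hy : y ≤ 2) :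
    Real.exp (-x) * normDemand c x < Real.exp (-y) * normDemand c y := by
  rw [revenue_of_le (hxy.le.trans hyc), revenue_of_le hyc]
  have h := mul_exp_neg_lt_of_le_one (y := x / 2) (z := y / 2)
    (by linarith) (by linarith) (by linarith)
  have h0 : 0 ≤ x / 2 * Real.exp (-(x / 2)) := by positivity
  have := pow_lt_pow_left₀ h h0 two_ne_zero
  linarith

lemma revenue_gt_quad {c x y : ℝ} (hx : 2 ≤ x) (hxy : x < y) (hyc : y ≤ c) :
    Real.exp (-y) * normDemand c y < Real.exp (-x) * normDemand c x := by
  rw [revenue_of_le (hxy.le.trans hyc), revenue_of_le hyc]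
  have h := mul_exp_neg_lt_of_one_le (y := x / 2) (z := y / 2) (by linarith) (by linarith)
  have hy : 0 ≤ y := by linarith
  have h0 : 0 ≤ y / 2 * Real.exp (-(y / 2)) := by positivity
  have := pow_lt_pow_left₀ h h0 two_ne_zero
  linarith

lemma revenue_lt_affine {c x y : ℝ} (hc : 0 < c) (hx : c ≤ x) (hxy : x < y) (hy : y ≤ c / 2 + 1) :
    Real.exp (-x) * normDemand c x < Real.exp (-y) * normDemand c y := by
  rw [revenue_of_ge hx, revenue_of_ge (hx.trans hxy.le)]
  exact mul_lt_mul_of_pos_left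
    (mul_exp_neg_lt_of_le_one (by linarith) (by linarith) (by linarith)) (by positivity)

lemma revenue_gt_affine {c x y : ℝ} (hc : 0 < c) (hx : c ≤ x) (hxy : x < y) (h1 : c / 2 + 1 ≤ x) :
    Real.exp (-y) * normDemand c y < Real.exp (-x) * normDemand c x := by
  rw [revenue_of_ge hx, revenue_of_ge (hx.trans hxy.le)]
  exact mul_lt_mul_of_pos_left
    (mul_exp_neg_lt_of_one_le (by linarith) (by linarith)) (by positivity)

/-- When the peak of the revenue lies beyond the kink at `c`, the revenue strictly increases up to
that peak. -/
lemma revenue_lt_of_lt_peak {c x y : ℝ} (hc : 0 < c) (hc2 : c ≤ 2) (hx : 0 ≤ x) (hcy : c < y)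
    (hxy : x < y) (hy : y ≤ c / 2 + 1) :
    Real.exp (-x) * normDemand c x < Real.exp (-y) * normDemand c y := by
  rcases lt_or_ge x c with h | h
  · exact (revenue_lt_quad hx h le_rfl hc2).trans (revenue_lt_affine hc le_rfl hcy hy)
  · exact revenue_lt_affine hc h hxy hy

/-- The optimum of the normalized problem: `optLog c L` is feasible and strictly beats every other
feasible point. -/
lemma normalized_optimum {c L : ℝ} (hc : 0 < c) (hL : 0 < L) :
    0 ≤ optLog c L ∧ normDemand c (optLog c L) ≤ L * c ∧
      ∀ x, 0 ≤ x → normDemand c x ≤ L * c → x ≠ optLog c L →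
        Real.exp (-x) * normDemand c x <
          Real.exp (-optLog c L) * normDemand c (optLog c L) := by
  unfold optLog
  split_ifs with h1 h2 h3
  · rw [le_min_iff, le_min_iff, le_div_iff₀ hc] at h1
    obtain ⟨ha, -, hb⟩ := h1
    have hs2 : Real.sqrt (2 * L * c) ^ 2 = 2 * L * c := Real.sq_sqrt (by positivity)
    have hs0 : 0 ≤ Real.sqrt (2 * L * c) := Real.sqrt_nonneg _
    generalize Real.sqrt (2 * L * c) = s at *
    have hsc : s ≤ c := by nlinarith
    have hs4 : s ≤ 2 := by nlinarith
    refine ⟨hs0, by rw [normDemand_of_le hsc]; linarith, fun x hx hf hne => ?_⟩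
    have hxs : x ≤ s := by
      rcases le_total x c with h | h
      · rw [normDemand_of_le h] at hf
        exact abs_le_of_sq_le_sq' (by linarith) hs0 |>.2
      · rw [normDemand_of_ge h] at hf
        have h4 : x - c / 2 ≤ L := le_of_mul_le_mul_left (by linarith) hc
        have hxc : x = c := by linarith
        have hLc : L = c / 2 := by linarith
        subst hLc
        nlinarith
    exact revenue_lt_quad hx (lt_of_le_of_ne hxs hne) hsc hs4
  · obtain ⟨ha, hb⟩ := h2
    refine ⟨by positivity, ?_, fun x hx hf hne => ?_⟩
    · rw [normDemand_of_ge (by linarith)]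
      exact le_of_eq (by ring)
    · have hxs : x ≤ c / 2 + L := by
        rcases le_total x c with h | h
        · linarith
        · rw [normDemand_of_ge h] at hf
          have h4 : x - c / 2 ≤ L := le_of_mul_le_mul_left (by linarith) hc
          linarith
      exact revenue_lt_of_lt_peak hc (by linarith) hx (by linarith) (lt_of_le_of_ne hxs hne)
        (by linarith)
  · obtain ⟨ha, hb⟩ := h3
    refine ⟨by positivity, ?_, fun x hx _ hne => ?_⟩
    · rw [normDemand_of_ge (by linarith)]
      nlinarith
    · rcases lt_or_gt_of_ne hne with h | h
      · exact revenue_lt_of_lt_peak hc (by linarith) hx (by linarith) h le_rfl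
      · exact revenue_gt_affine hc (by linarith) h le_rfl
  · have hc2 : 2 ≤ c := by
      by_contra! hlt
      have hL' : c / 2 < L := by
        by_contra! hle
        refine h1 (le_min hle (le_min (by linarith) ?_))
        rw [le_div_iff₀ hc]
        nlinarith
      rcases le_or_gt L 1 with h | h
      · exact h2 ⟨hL', h⟩
      · exact h3 ⟨by linarith, h⟩
    have hLc : 2 ≤ L * c := by
      by_contra! hlt
      have hL1 : L ≤ 1 := by nlinarith
      exact h1 (le_min (by linarith) (le_min hL1 ((le_div_iff₀ hc).2 hlt.le)))
    refine ⟨by norm_num, by rw [normDemand_of_le hc2]; linarith, fun x hx _ hne => ?_⟩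
    rcases lt_or_gt_of_ne hne with h | h
    · exact revenue_lt_quad hx h hc2 le_rfl
    · rcases le_or_gt x c with hxc | hxc
      · exact revenue_gt_quad le_rfl h hxc
      · have h5 := revenue_gt_affine hc le_rfl hxc (by linarith)
        rcases hc2.eq_or_lt with h6 | h6
        · subst h6; exact h5
        · exact h5.trans (revenue_gt_quad le_rfl h6 le_rfl)

theorem stmt2 (a γ lam M σmax N φ δ : ℝ) (ha : 0 < a) (hγ : γ ∈ Set.Ioc (0 : ℝ) 1)
    (hlam : 0 < lam) (hM : 0 < M) (hσ : 0 < σmax) (hN : 0 < N)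
    (hφ : φ ∈ Set.Ioc (0 : ℝ) 1) (hδ : δ ∈ Set.Ico (0 : ℝ) 1) :
    let σT : ℝ → ℝ := fun pa => min ((1 / γ) * Real.log (a * γ / pa)) σmax
    let Q : ℝ → ℝ := fun pa =>
      (M * N * φ / σmax) * (Real.log (a * γ / pa) * σT pa - (γ / 2) * (σT pa) ^ 2)
    let R : ℝ → ℝ := fun pa => (1 - δ) * pa * Q pa
    let S : Set ℝ := {pa | pa ∈ Set.Ioc 0 (a * γ) ∧ Q pa ≤ lam * N * φ}
    let paStar : ℝ :=
      if lam / M ≤ min (γ * σmax / 2) (min 1 (2 / (γ * σmax))) then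
        a * γ * Real.exp (-Real.sqrt (2 * lam * γ * σmax / M))
      else if γ * σmax / 2 < lam / M ∧ lam / M ≤ 1 then
        a * γ * Real.exp (-(γ * σmax / 2 + lam / M))
      else if γ * σmax / 2 < 1 ∧ 1 < lam / M then
        a * γ * Real.exp (-(γ * σmax / 2 + 1))
      else a * γ * Real.exp (-2)
    paStar ∈ S ∧ (∀ pa ∈ S, R pa ≤ R paStar) ∧ (∀ pa ∈ S, R pa = R paStar → pa = paStar) := by
  intro σT Q R S paStar
  obtain ⟨hγ0, -⟩ := hγ
  obtain ⟨hφ0, -⟩ := hφ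
  obtain ⟨-, hδ1⟩ := hδ
  have hA : 0 < a * γ := mul_pos ha hγ0
  have hc : 0 < γ * σmax := mul_pos hγ0 hσ
  have hL : 0 < lam / M := div_pos hlam hM
  have hstar : paStar = a * γ * Real.exp (-optLog (γ * σmax) (lam / M)) := by
    simp only [paStar, optLog]
    have e : 2 * lam * γ * σmax / M = 2 * (lam / M) * (γ * σmax) := by ring
    rw [e]
    split_ifs <;> rfl
  have hQ : ∀ x, Q (a * γ * Real.exp (-x)) =
      M * N * φ / (γ * σmax) * normDemand (γ * σmax) x := by
    intro x
    have hlog : Real.log (a * γ / (a * γ * Real.exp (-x))) = x := by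
      rw [Real.exp_neg, show a * γ / (a * γ * (Real.exp x)⁻¹) = Real.exp x by field_simp,
        Real.log_exp]
    have hmin : min (1 / γ * x) σmax = 1 / γ * min x (γ * σmax) := by
      rw [mul_min_of_nonneg _ _ (by positivity : 0 ≤ 1 / γ)]
      congr 1
      field_simp
    simp only [Q, σT, hlog, hmin, normDemand]
    field_simp
  have hR : ∀ x, R (a * γ * Real.exp (-x)) =
      (1 - δ) * (a * γ) * (M * N * φ / (γ * σmax)) *
        (Real.exp (-x) * normDemand (γ * σmax) x) := by
    intro x
    simp only [R, hQ]
    ring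
  have hK : 0 < M * N * φ / (γ * σmax) := by positivity
  have hK' : 0 < (1 - δ) * (a * γ) * (M * N * φ / (γ * σmax)) :=
    mul_pos (mul_pos (by linarith) hA) hK
  have hS : ∀ x, a * γ * Real.exp (-x) ∈ S ↔
      0 ≤ x ∧ normDemand (γ * σmax) x ≤ lam / M * (γ * σmax) := by
    intro x
    have e : lam * N * φ = M * N * φ / (γ * σmax) * (lam / M * (γ * σmax)) := by
      field_simp
    simp only [S, Set.mem_setOf_eq, Set.mem_Ioc, hQ]
    rw [e, mul_le_mul_iff_right₀ hK, mul_le_iff_le_one_right hA, Real.exp_le_one_iff,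
      neg_nonpos]
    exact and_congr_left fun _ => and_iff_right (by positivity)
  obtain ⟨h0, hfeas, hopt⟩ := normalized_optimum hc hL
  have hlt : ∀ pa ∈ S, pa ≠ paStar → R pa < R paStar := by
    intro pa hpa hne
    have hpos : 0 < pa := hpa.1.1
    obtain ⟨x, rfl⟩ : ∃ x, pa = a * γ * Real.exp (-x) := by
      refine ⟨-Real.log (pa / (a * γ)), ?_⟩
      rw [neg_neg, Real.exp_log (by positivity)]
      field_simp
    rw [hS] at hpa
    rw [hstar] at hne ⊢
    rw [hR, hR]
    refine mul_lt_mul_of_pos_left (hopt x hpa.1 hpa.2 ?_) hK'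
    rintro rfl
    exact hne rfl
  refine ⟨?_, fun pa hpa => ?_, fun pa hpa heq => ?_⟩
  · rw [hstar, hS]
    exact ⟨h0, hfeas⟩
  · rcases eq_or_ne pa paStar with h | h
    · rw [h]
    · exact (hlt pa hpa h).le
  · by_contra h
    exact (hlt pa hpa h).ne heq
end

section
/- Let a > 0, γ ∈ (0,1], λ > 0, η > 0. For M > 0 and σ_max > 0, let p_a*(M, σ_max) be defined by: aγ e^{−√(2λγσ_max/M)} if λ/M ≤ min{ γσ_max/2, 1, 2/(γσ_max) }; aγ e^{−(γσ_max/2 + λ/M)} if γσ_max/2 < λ/M ≤ 1; aγ e^{−(γσ_max/2 + 1)} if γσ_max/2 < 1 < λ/M; and aγ e^{−2} otherwise. Then for any sequences M_n → ∞ and σ_n → ∞ with M_n/σ_n → η, the sequence p_a*(M_n, σ_n) converges to p_a^∞ := aγ e^{−√(2λγ/η)} if 0 < λ ≤ 2η/γ, and to p_a^∞ := aγ e^{−2} if λ > 2η/γ. -/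
/-!
Put `q = 2λγσ/M`, so that `q → 2λγ/η`. Once `M` and `σ` are large, `λ/M` is below both `1` and
`γσ/2`, so the two middle branches of the price are void and the first one applies exactly when
`λ/M ≤ 2/(γσ)`, i.e. when `q ≤ 4`. Hence the price is eventually `aγ exp (-√(min q 4))`
(`ite_eq_exp_sqrt_min`), a continuous function of `q`, and the claimed limit is the value of this
same function at `2λγ/η`. In particular, the case where `q` tends to the threshold `4` from either
side needs no separate treatment.
-/

/-- The two price regimes glue continuously at `q = 4`, because `√4 = 2`. -/
theorem ite_eq_exp_sqrt_min (c q : ℝ) :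
    (if q ≤ 4 then c * Real.exp (-Real.sqrt q) else c * Real.exp (-2)) =
      c * Real.exp (-Real.sqrt (min q 4)) := by
  have h4 : Real.sqrt 4 = 2 := by
    rw [show (4 : ℝ) = 2 ^ 2 by norm_num]
    exact Real.sqrt_sq (by norm_num)
  split_ifs with h
  · rw [min_eq_left h]
  · rw [min_eq_right (not_le.mp h).le, h4]

theorem stmt3 (a γ lam η : ℝ) (ha : 0 < a) (hγ : γ ∈ Set.Ioc (0 : ℝ) 1)
    (hlam : 0 < lam) (hη : 0 < η) :
    let paStar : ℝ → ℝ → ℝ := fun M σmax =>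
      if lam / M ≤ min (γ * σmax / 2) (min 1 (2 / (γ * σmax))) then
        a * γ * Real.exp (-Real.sqrt (2 * lam * γ * σmax / M))
      else if γ * σmax / 2 < lam / M ∧ lam / M ≤ 1 then
        a * γ * Real.exp (-(γ * σmax / 2 + lam / M))
      else if γ * σmax / 2 < 1 ∧ 1 < lam / M then
        a * γ * Real.exp (-(γ * σmax / 2 + 1))
      else a * γ * Real.exp (-2)
    let paInf : ℝ :=
      if lam ≤ 2 * η / γ then a * γ * Real.exp (-Real.sqrt (2 * lam * γ / η))
      else a * γ * Real.exp (-2)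
    ∀ Mn σn : ℕ → ℝ,
      Filter.Tendsto Mn Filter.atTop Filter.atTop →
      Filter.Tendsto σn Filter.atTop Filter.atTop →
      Filter.Tendsto (fun n => Mn n / σn n) Filter.atTop (nhds η) →
      Filter.Tendsto (fun n => paStar (Mn n) (σn n)) Filter.atTop (nhds paInf) := by
  obtain ⟨hγ0, -⟩ := hγ
  intro paStar paInf Mn σn hM hσ hη'
  have hInf : paInf =
      a * γ * Real.exp (-Real.sqrt (min (2 * lam * γ / η) 4)) := by
    rw [← ite_eq_exp_sqrt_min]
    have : lam ≤ 2 * η / γ ↔ 2 * lam * γ / η ≤ 4 := by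
      rw [le_div_iff₀ hγ0, div_le_iff₀ hη]
      constructor <;> intro h <;> linarith
    simp only [paInf, this]
  have hq : Filter.Tendsto (fun n => 2 * lam * γ * σn n / Mn n) Filter.atTop
      (nhds (2 * lam * γ / η)) := by
    have h := (hη'.inv₀ hη.ne').const_mul (2 * lam * γ)
    simpa only [inv_div, ← mul_div_assoc, ← div_eq_mul_inv] using h
  have hlim : Filter.Tendsto
      (fun n => a * γ * Real.exp (-Real.sqrt (min (2 * lam * γ * σn n / Mn n) 4)))
      Filter.atTop (nhds paInf) := by
    rw [hInf]
    have hc : Continuous fun q : ℝ => a * γ * Real.exp (-Real.sqrt (min q 4)) := by fun_prop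
    exact (hc.tendsto _).comp hq
  refine hlim.congr' ?_
  filter_upwards [hM.eventually_ge_atTop lam, hσ.eventually_ge_atTop (2 / γ)] with n hMn hσn
  have hM0 : 0 < Mn n := hlam.trans_le hMn
  have hσ0 : 0 < σn n := (by positivity : 0 < 2 / γ).trans_le hσn
  have h1 : lam / Mn n ≤ 1 := (div_le_one hM0).mpr hMn
  have h2 : 1 ≤ γ * σn n / 2 := by
    rw [div_le_iff₀ hγ0] at hσn
    linarith
  have h3 : lam / Mn n ≤ γ * σn n / 2 := h1.trans h2
  have h4 : lam / Mn n ≤ 2 / (γ * σn n) ↔ 2 * lam * γ * σn n / Mn n ≤ 4 := by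
    rw [div_le_div_iff₀ hM0 (by positivity), div_le_iff₀ hM0]
    constructor <;> intro h <;> linarith
  rw [← ite_eq_exp_sqrt_min]
  simp only [paStar, le_min_iff, h1, h3, h4, not_lt.mpr h1, not_lt.mpr h3, true_and, false_and,
    and_false, if_false]
end

section
/- Let λ > 0, N > 0, a > 0, β ∈ (0,1], θ_max > 0, γ ∈ (0,1], η > 0, and δ ∈ [0,1]. Define g(λ,γ,η) = λγ e^{−√(2λγ/η)} if 0 < λ ≤ 2η/γ and g(λ,γ,η) = 2η e^{−2} if λ > 2η/γ. Then the function F(p_f) = λ p_f N (1 − p_f/(β θ_max)) + (1−δ) a N g(λ,γ,η) · (p_f/(β θ_max)) attains its maximum over [0, β θ_max] at the unique point p_f*(δ) = β θ_max / 2 + min{ (1−δ) a g(λ,γ,η) / (2λ), β θ_max / 2 }. -/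
/-!
Write `M = β θmax` and `k = (1 - δ) a g / (2 lam) ≥ 0`. Completing the square shows that the revenue
is a strictly concave parabola with leading coefficient `-(lam N / M)` and vertex `M / 2 + k`, and
`pfStar` is the projection of this vertex onto `[0, M]`. The variational inequality
`(p - pfStar) (vertex - pfStar) ≤ 0` for the projection upgrades to
`F p + (lam N / M) (p - pfStar)² ≤ F pfStar`, which gives both maximality and uniqueness.
-/

/-- Quadratic growth of the revenue gap around the projected vertex `M / 2 + min k (M / 2)`. -/
lemma revenue_gap (lam N M c p : ℝ) (hlam : 0 < lam) (hN : 0 < N) (hM : 0 < M) (hp : p ≤ M) :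
    lam * p * N * (1 - p / M) + c * N * (p / M)
        + lam * N / M * (p - (M / 2 + min (c / (2 * lam)) (M / 2))) ^ 2 ≤
      lam * (M / 2 + min (c / (2 * lam)) (M / 2)) * N *
          (1 - (M / 2 + min (c / (2 * lam)) (M / 2)) / M)
        + c * N * ((M / 2 + min (c / (2 * lam)) (M / 2)) / M) := by
  obtain ⟨k, rfl⟩ : ∃ k, c = 2 * lam * k := ⟨c / (2 * lam), by field_simp⟩
  have hk : 2 * lam * k / (2 * lam) = k := by field_simp
  rw [hk]
  have hvar : 0 ≤ (M / 2 + min k (M / 2) - p) * (k - min k (M / 2)) := by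
    rcases le_total k (M / 2) with h | h
    · simp [min_eq_left h]
    · rw [min_eq_right h]
      exact mul_nonneg (by linarith) (by linarith)
  generalize min k (M / 2) = m at hvar ⊢
  have hpos : 0 ≤ 2 * (lam * N / M) * ((M / 2 + m - p) * (k - m)) := by positivity
  have key : lam * (M / 2 + m) * N * (1 - (M / 2 + m) / M) + 2 * lam * k * N * ((M / 2 + m) / M)
      - (lam * p * N * (1 - p / M) + 2 * lam * k * N * (p / M)
        + lam * N / M * (p - (M / 2 + m)) ^ 2)
      = 2 * (lam * N / M) * ((M / 2 + m - p) * (k - m)) := by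
    field_simp
    ring
  linarith

theorem stmt6 (lam N a β θmax γ η δ : ℝ) (hlam : 0 < lam) (hN : 0 < N) (ha : 0 < a)
    (hβ : β ∈ Set.Ioc (0 : ℝ) 1) (hθ : 0 < θmax) (hγ : γ ∈ Set.Ioc (0 : ℝ) 1)
    (hη : 0 < η) (hδ : δ ∈ Set.Icc (0 : ℝ) 1) :
    let g : ℝ :=
      if lam ≤ 2 * η / γ then lam * γ * Real.exp (-Real.sqrt (2 * lam * γ / η))
      else 2 * η * Real.exp (-2)
    let F : ℝ → ℝ := fun pf =>
      lam * pf * N * (1 - pf / (β * θmax)) + (1 - δ) * a * N * g * (pf / (β * θmax))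
    let pfStar : ℝ := β * θmax / 2 + min ((1 - δ) * a * g / (2 * lam)) (β * θmax / 2)
    pfStar ∈ Set.Icc 0 (β * θmax) ∧
    (∀ pf ∈ Set.Icc 0 (β * θmax), F pf ≤ F pfStar) ∧
    (∀ pf ∈ Set.Icc 0 (β * θmax), F pf = F pfStar → pf = pfStar) := by
  intro g F pfStar
  have hγ0 := hγ.1
  have hM : 0 < β * θmax := mul_pos hβ.1 hθ
  have hg : 0 ≤ g := by
    simp only [g]
    split_ifs <;> positivity
  have hδ' : 0 ≤ 1 - δ := by linarith [hδ.2]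
  have hc : 0 ≤ (1 - δ) * a * g / (2 * lam) := by positivity
  have gap : ∀ pf ∈ Set.Icc 0 (β * θmax),
      F pf + lam * N / (β * θmax) * (pf - pfStar) ^ 2 ≤ F pfStar := by
    intro pf hpf
    have h := revenue_gap lam N (β * θmax) ((1 - δ) * a * g) pf hlam hN hM hpf.2
    simp only [F, pfStar, mul_right_comm ((1 - δ) * a) N g]
    exact h
  have hcoef : 0 < lam * N / (β * θmax) := by positivity
  refine ⟨⟨?_, ?_⟩, ?_, ?_⟩
  · have h2 : 0 ≤ min ((1 - δ) * a * g / (2 * lam)) (β * θmax / 2) := le_min hc (by positivity)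
    simp only [pfStar]
    positivity
  · have := min_le_right ((1 - δ) * a * g / (2 * lam)) (β * θmax / 2)
    simp only [pfStar]
    linarith
  · intro pf hpf
    have := gap pf hpf
    have h2 : 0 ≤ lam * N / (β * θmax) * (pf - pfStar) ^ 2 := by positivity
    linarith
  · intro pf hpf heq
    have := gap pf hpf
    by_contra hne
    have h2 : 0 < lam * N / (β * θmax) * (pf - pfStar) ^ 2 :=
      mul_pos hcoef (sq_pos_of_ne_zero (sub_ne_zero.mpr hne))
    linarith
end

section
/- Let λ > 0, N > 0, a > 0, β ∈ (0,1], θ_max > 0, γ ∈ (0,1], η > 0, and ε ∈ (0, 1/3). Define g(λ,γ,η) = λγ e^{−√(2λγ/η)} if 0 < λ ≤ 2η/γ and 2η e^{−2} if λ > 2η/γ, and Ω = λ β θ_max / (a g(λ,γ,η)). Then the ad platform's revenue Π^APL(δ) = δ a N g(λ,γ,η) · min{ 1, 1/2 + (1−δ)/(2Ω) } attains its maximum over δ ∈ [0, 1−ε] at the unique point δ* given by: δ* = 1−ε if Ω ∈ (0, ε]; δ* = 1−Ω if Ω ∈ (ε, 1/3]; δ* = 1/2 + Ω/2 if Ω ∈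 (1/3, 1−2ε); and δ* = 1−ε if Ω ∈ [1−2ε, ∞). -/
/-!
Up to the positive factor `a * N * g`, the revenue is `share Ω δ = min δ (q δ)`, where
`q δ = δ * (Ω + 1 - δ) / (2 * Ω)` is a concave parabola with vertex `(1 + Ω) / 2`. The two branches
cross at `δ = 1 - Ω`: the linear one is active to its left, the parabola to its right. The vertex
lies to the right of the crossing exactly when `Ω > 1 / 3`. Hence on `[0, ∞)` the function strictly
increases up to `max (1 - Ω) ((1 + Ω) / 2)` and strictly decreases afterwards, and truncating this
peak at `1 - ε` gives the four regimes. Everything follows from a strict inequality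
`share Ω δ < share Ω δStar` for `δ ≠ δStar`, obtained by bounding the left side by a suitable branch.
-/

/-- The platform's revenue normalised by the factor `a * N * g`. -/
noncomputable def share (Ω δ : ℝ) : ℝ := δ * min 1 (1 / 2 + (1 - δ) / (2 * Ω))

lemma share_le_self {Ω δ : ℝ} (hδ : 0 ≤ δ) : share Ω δ ≤ δ :=
  mul_le_of_le_one_right hδ (min_le_left _ _)

lemma share_le_quad {Ω δ : ℝ} (hΩ : 0 < Ω) (hδ : 0 ≤ δ) :
    share Ω δ ≤ δ * (Ω + 1 - δ) / (2 * Ω) := by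
  have h : δ * (Ω + 1 - δ) / (2 * Ω) = δ * (1 / 2 + (1 - δ) / (2 * Ω)) := by
    field_simp
    ring
  rw [h]
  exact mul_le_mul_of_nonneg_left (min_le_right _ _) hδ

lemma share_eq_self {Ω δ : ℝ} (hΩ : 0 < Ω) (h : δ ≤ 1 - Ω) : share Ω δ = δ := by
  have h1 : 1 / 2 ≤ (1 - δ) / (2 * Ω) := by
    rw [le_div_iff₀ (by positivity)]
    linarith
  rw [share, min_eq_left (by linarith), mul_one]

lemma share_eq_quad {Ω δ : ℝ} (hΩ : 0 < Ω) (h : 1 - Ω ≤ δ) :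
    share Ω δ = δ * (Ω + 1 - δ) / (2 * Ω) := by
  have h1 : (1 - δ) / (2 * Ω) ≤ 1 / 2 := by
    rw [div_le_iff₀ (by positivity)]
    linarith
  rw [share, min_eq_right (by linarith)]
  field_simp
  ring

/-- To the right of the crossing, a point `d` beats every `δ` that lies farther from the vertex
`(1 + Ω) / 2` of the parabola; the hypothesis `h` is a factored form of this comparison. -/
lemma share_lt_of_quad {Ω δ d : ℝ} (hΩ : 0 < Ω) (hδ : 0 ≤ δ) (hd : 1 - Ω ≤ d)
    (h : 0 < (d - δ) * (Ω + 1 - d - δ)) : share Ω δ < share Ω d := by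
  rw [share_eq_quad hΩ hd]
  refine (share_le_quad hΩ hδ).trans_lt ?_
  gcongr ?_ / _
  linarith

/-- The revenue-maximising share as a function of the equilibrium indicator `Ω` and the cap
`1 - ε`. -/
noncomputable def optShare (Ω ε : ℝ) : ℝ :=
  if Ω ≤ ε then 1 - ε
  else if Ω ≤ 1 / 3 then 1 - Ω
  else if Ω < 1 - 2 * ε then 1 / 2 + Ω / 2
  else 1 - ε

lemma optShare_mem {Ω ε : ℝ} (hε : ε ∈ Set.Ioo (0 : ℝ) (1 / 3)) :
    optShare Ω ε ∈ Set.Icc 0 (1 - ε) := by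
  obtain ⟨h0, h1⟩ := hε
  unfold optShare
  split_ifs <;> constructor <;> linarith

lemma share_lt_optShare {Ω ε δ : ℝ} (hΩ : 0 < Ω) (hε : ε ∈ Set.Ioo (0 : ℝ) (1 / 3))
    (hδ : δ ∈ Set.Icc 0 (1 - ε)) (hne : δ ≠ optShare Ω ε) :
    share Ω δ < share Ω (optShare Ω ε) := by
  obtain ⟨h0, h1⟩ := hε
  obtain ⟨hδ0, hδ1⟩ := hδ
  unfold optShare at hne ⊢
  split_ifs at hne ⊢ with hA hB hC
  · rw [share_eq_self hΩ (by linarith : 1 - ε ≤ 1 - Ω)]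
    exact (share_le_self hδ0).trans_lt (lt_of_le_of_ne hδ1 hne)
  · rcases lt_or_gt_of_ne hne with hlt | hgt
    · rw [share_eq_self hΩ le_rfl]
      exact (share_le_self hδ0).trans_lt hlt
    · exact share_lt_of_quad hΩ hδ0 le_rfl
        (mul_pos_of_neg_of_neg (by linarith) (by linarith))
  · refine share_lt_of_quad hΩ hδ0 (by linarith) ?_
    -- At the vertex the two factors coincide.
    have hsq : 0 < (1 / 2 + Ω / 2 - δ) ^ 2 := sq_pos_of_ne_zero (sub_ne_zero.mpr hne.symm)
    linarith
  · have hlt : δ < 1 - ε := lt_of_le_of_ne hδ1 hne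
    exact share_lt_of_quad hΩ hδ0 (by linarith) (mul_pos (by linarith) (by linarith))


theorem stmt7 (lam N a β θmax γ η ε : ℝ) (hlam : 0 < lam) (hN : 0 < N) (ha : 0 < a)
    (hβ : β ∈ Set.Ioc (0 : ℝ) 1) (hθ : 0 < θmax) (hγ : γ ∈ Set.Ioc (0 : ℝ) 1)
    (hη : 0 < η) (hε : ε ∈ Set.Ioo (0 : ℝ) (1 / 3)) :
    let g : ℝ :=
      if lam ≤ 2 * η / γ then lam * γ * Real.exp (-Real.sqrt (2 * lam * γ / η))
      else 2 * η * Real.exp (-2)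
    let Ω : ℝ := lam * β * θmax / (a * g)
    let APL : ℝ → ℝ := fun δ => δ * a * N * g * min 1 (1 / 2 + (1 - δ) / (2 * Ω))
    let δStar : ℝ :=
      if Ω ≤ ε then 1 - ε
      else if Ω ≤ 1 / 3 then 1 - Ω
      else if Ω < 1 - 2 * ε then 1 / 2 + Ω / 2
      else 1 - ε
    δStar ∈ Set.Icc 0 (1 - ε) ∧
    (∀ δ ∈ Set.Icc (0 : ℝ) (1 - ε), APL δ ≤ APL δStar) ∧
    (∀ δ ∈ Set.Icc (0 : ℝ) (1 - ε), APL δ = APL δStar → δ = δStar) := by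
  intro g Ω APL δStar
  have hγ0 : 0 < γ := hγ.1
  have hβ0 : 0 < β := hβ.1
  have hg : 0 < g := by
    simp only [g]
    split_ifs <;> positivity
  have hΩ : 0 < Ω := by positivity
  have hK : 0 < a * N * g := by positivity
  have hAPL : ∀ δ, APL δ = a * N * g * share Ω δ := fun δ => by
    simp only [APL, share]
    ring
  have hlt : ∀ δ ∈ Set.Icc (0 : ℝ) (1 - ε), δ ≠ δStar → APL δ < APL δStar := by
    intro δ hδ hne
    rw [hAPL, hAPL]
    exact mul_lt_mul_of_pos_left (share_lt_optShare hΩ hε hδ hne) hK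
  refine ⟨optShare_mem hε, fun δ hδ => ?_, fun δ hδ heq => ?_⟩
  · rcases eq_or_ne δ δStar with rfl | hne
    · exact le_rfl
    · exact (hlt δ hδ hne).le
  · by_contra hne
    exact (hlt δ hδ hne).ne heq
end

section
/- Let λ > 0, a > 0, β ∈ (0,1], θ_max > 0, γ ∈ (0,1], η > 0, and ε ∈ (0, 1/3). Define g(λ,γ,η) = λγ e^{−√(2λγ/η)} if 0 < λ ≤ 2η/γ and 2η e^{−2} if λ > 2η/γ, Ω = λ β θ_max / (a g(λ,γ,η)), p_f*(δ) = β θ_max/2 + min{ (1−δ) a g(λ,γ,η)/(2λ), β θ_max/2 }, and δ* = 1−ε if Ω ∈ (0, ε], 1−Ω if Ω ∈ (ε, 1/3], 1/2 + Ω/2 if Ω ∈ (1/3, 1−2ε), and 1−ε if Ω ∈ [1−2ε, ∞). Then p_f*(δ*) = β θ_max if Ω ∈ (0, 1/3]; p_f*(δ*) = β θ_max/4 + a g(λ,γ,η)/(4λ) if Ω ∈ (1/3, 1−2ε); and p_f*(δ*) = β θ_max/2 + a g(λ,γ,η) ε/(2λ) if Ω ∈ [1−2ε, ∞). -/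
/-!
Put `A = a g / λ > 0`, so that `β θmax = Ω A`. Factoring out `A / 2`, the price at sharing ratio `δ`
is `(A / 2) (Ω + min (1 - δ) Ω)` (`price_eq`), so only the comparison of `1 - δ*` with `Ω` matters.
For `Ω ≤ 1/3` one has `1 - δ* = max ε Ω ≥ Ω`, so the price is `Ω A = β θmax`.
For `1/3 < Ω < 1 - 2ε` one has `1 - δ* = (1 - Ω)/2 < Ω`, and for `Ω ≥ 1 - 2ε > 1/3 > ε` one has
`1 - δ* = ε < Ω`; in both cases the minimum is `1 - δ*`.
-/

/-- The price in normalised form, with `b` in the role of `β θmax`: the factor `a * g / (2 * lam)` can be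
pulled out of the minimum. -/
lemma price_eq {lam a g b : ℝ} (hlam : 0 < lam) (hag : 0 < a * g) (δ : ℝ) :
    b / 2 + min ((1 - δ) * a * g / (2 * lam)) (b / 2) =
      a * g / (2 * lam) * (lam * b / (a * g) + min (1 - δ) (lam * b / (a * g))) := by
  have hb : b / 2 = a * g / (2 * lam) * (lam * b / (a * g)) := by
    have := hag.ne'
    generalize a * g = A at *
    field_simp
  rw [mul_add, mul_min_of_nonneg _ _ (by positivity : 0 ≤ a * g / (2 * lam)), ← hb]
  congr 2
  ring

theorem stmt9 (lam a β θmax γ η ε : ℝ) (hlam : 0 < lam) (ha : 0 < a)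
    (hβ : β ∈ Set.Ioc (0 : ℝ) 1) (hθ : 0 < θmax) (hγ : γ ∈ Set.Ioc (0 : ℝ) 1)
    (hη : 0 < η) (hε : ε ∈ Set.Ioo (0 : ℝ) (1 / 3)) :
    let g : ℝ :=
      if lam ≤ 2 * η / γ then lam * γ * Real.exp (-Real.sqrt (2 * lam * γ / η))
      else 2 * η * Real.exp (-2)
    let Ω : ℝ := lam * β * θmax / (a * g)
    let pf : ℝ → ℝ := fun δ =>
      β * θmax / 2 + min ((1 - δ) * a * g / (2 * lam)) (β * θmax / 2)
    let δStar : ℝ :=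
      if Ω ≤ ε then 1 - ε
      else if Ω ≤ 1 / 3 then 1 - Ω
      else if Ω < 1 - 2 * ε then 1 / 2 + Ω / 2
      else 1 - ε
    (Ω ∈ Set.Ioc 0 (1 / 3) → pf δStar = β * θmax) ∧
    (Ω ∈ Set.Ioo (1 / 3) (1 - 2 * ε) → pf δStar = β * θmax / 4 + a * g / (4 * lam)) ∧
    (Ω ∈ Set.Ici (1 - 2 * ε) → pf δStar = β * θmax / 2 + a * g * ε / (2 * lam)) := by
  intro g Ω pf δStar
  obtain ⟨hε0, hε1⟩ := hε
  have hg : 0 < g := by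
    have := hγ.1
    dsimp only [g]
    split_ifs <;> positivity
  have hag : 0 < a * g := mul_pos ha hg
  have hpf : ∀ δ, pf δ = a * g / (2 * lam) * (Ω + min (1 - δ) Ω) := fun δ => by
    simpa only [pf, Ω, mul_assoc] using price_eq (b := β * θmax) hlam hag δ
  have hΩ : a * g / (2 * lam) * Ω = β * θmax / 2 := by
    dsimp only [Ω]
    have := hag.ne'
    generalize a * g = A at *
    field_simp
  have hδ : δStar = if Ω ≤ ε then 1 - ε else if Ω ≤ 1 / 3 then 1 - Ω
      else if Ω < 1 - 2 * ε then 1 / 2 + Ω / 2 else 1 - ε := rfl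
  clear_value pf δStar Ω g
  refine ⟨fun ⟨_, h⟩ => ?_, fun ⟨h1, h2⟩ => ?_, fun h => ?_⟩
  · have hle : Ω ≤ 1 - δStar := by
      rw [hδ]
      split_ifs <;> linarith
    rw [hpf, min_eq_right hle, mul_add, hΩ]
    ring
  · rw [if_neg (by linarith), if_neg (by linarith), if_pos h2] at hδ
    rw [hpf, min_eq_left (by linarith), hδ]
    linear_combination (1 / 2) * hΩ
  · rw [Set.mem_Ici] at h
    rw [if_neg (by linarith), if_neg (by linarith), if_neg (by linarith)] at hδ
    rw [hpf, min_eq_left (by linarith), hδ]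
    linear_combination hΩ
end

section
/- Let λ > 0, a > 0, β ∈ (0,1], θ_max > 0, γ ∈ (0,1], η > 0, and ε ∈ (0, 1/3). Define g(λ,γ,η) = λγ e^{−√(2λγ/η)} if 0 < λ ≤ 2η/γ and 2η e^{−2} if λ > 2η/γ, and Ω = λ β θ_max / (a g(λ,γ,η)). Let the equilibrium Wi-Fi price be P = β θ_max if Ω ∈ (0, 1/3]; P = β θ_max/4 + a g(λ,γ,η)/(4λ) if Ω ∈ (1/3, 1−2ε); and P = β θ_max/2 + a g(λ,γ,η) ε/(2λ) if Ω ∈ [1−2ε, ∞). Then the equilibrium fraction of mobile users choosing the advertising sponsored access, φ_a = P/(β θ_max), satisfies φ_a ≥ 1/2; moreover φ_a = 1 when Ω ∈ (0, 1/3]. -/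
/-!
Write `B = β θmax`. Since `g > 0`, the threshold `Ω < 1` is equivalent to `lam * B < a * g`.
In the three regimes `P / B` equals `1`, `1/4 + 1/(4Ω)` and `1/2 + ε/(2Ω)`. The first and third are
at least `1/2` because `Ω, ε > 0`; the second is because `Ω < 1 - 2ε < 1` there.
The form of `g` matters only through its positivity.
-/

theorem stmt10 (lam a β θmax γ η ε : ℝ) (hlam : 0 < lam) (ha : 0 < a)
    (hβ : β ∈ Set.Ioc (0 : ℝ) 1) (hθ : 0 < θmax) (hγ : γ ∈ Set.Ioc (0 : ℝ) 1)
    (hη : 0 < η) (hε : ε ∈ Set.Ioo (0 : ℝ) (1 / 3)) :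
    let g : ℝ :=
      if lam ≤ 2 * η / γ then lam * γ * Real.exp (-Real.sqrt (2 * lam * γ / η))
      else 2 * η * Real.exp (-2)
    let Ω : ℝ := lam * β * θmax / (a * g)
    let P : ℝ :=
      if Ω ≤ 1 / 3 then β * θmax
      else if Ω < 1 - 2 * ε then β * θmax / 4 + a * g / (4 * lam)
      else β * θmax / 2 + a * g * ε / (2 * lam)
    P / (β * θmax) ≥ 1 / 2 ∧ (Ω ∈ Set.Ioc 0 (1 / 3) → P / (β * θmax) = 1) := by
  intro g Ω P
  obtain ⟨hβ0, -⟩ := hβ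
  obtain ⟨hγ0, -⟩ := hγ
  obtain ⟨hε0, -⟩ := hε
  have hg : 0 < g := by
    dsimp only [g]
    split_ifs <;> positivity
  have hB : 0 < β * θmax := mul_pos hβ0 hθ
  have hag : 0 < a * g := mul_pos ha hg
  refine ⟨?_, fun h => ?_⟩
  · rw [ge_iff_le, le_div_iff₀ hB]
    dsimp only [P]
    split_ifs with h1 h2
    · linarith
    · have hlt : lam * β * θmax < a * g := by
        have hΩ : lam * β * θmax / (a * g) < 1 := by
          change Ω < 1
          linarith
        rwa [div_lt_one hag] at hΩ
      have key : β * θmax / 4 ≤ a * g / (4 * lam) := by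
        rw [div_le_div_iff₀ (by norm_num) (by positivity)]
        linarith
      linarith
    · have : 0 < a * g * ε / (2 * lam) := by positivity
      linarith
  · dsimp only [P]
    rw [if_pos h.2, div_self hB.ne']
end

section
/- Let a > 0, λ > 0, and η > 0. The function γ ↦ p_a^∞(γ), defined on (0,∞) by p_a^∞(γ) = aγ e^{−√(2λγ/η)} if γ ≥ λ⁻¹·... equivalently if λ ≤ 2η/γ (i.e., γ ≤ 2η/λ), and p_a^∞(γ) = aγ e^{−2} if γ > 2η/λ, is continuous and strictly increasing on (0,∞). -/
/-!
Substitute `s = √(2 lam γ / η)`. For `γ > 0` the case condition `lam ≤ 2 η / γ` says exactly `s ≤ 2`,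
so both branches are `a γ exp (-min s 2)`, which is visibly continuous. Since `γ = η s² / (2 lam)`,
the function is a positive multiple of the square of `s exp (-(min s 2) / 2)`, and this is strictly
increasing in `s > 0` by the tangent-line bound `1 - u < exp (-u)` (`mul_exp_neg_min_half_lt`).
-/

theorem mul_exp_neg_min_half_lt {s t : ℝ} (hs : 0 < s) (hst : s < t) :
    s * Real.exp (-(min s 2 / 2)) < t * Real.exp (-(min t 2 / 2)) := by
  rcases le_or_gt 2 s with h | h
  · rw [min_eq_right h, min_eq_right (h.trans hst.le)]
    gcongr
  · rw [min_eq_left h.le]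
    have hsq : s < min t 2 := lt_min hst h
    have hq2 : min t 2 ≤ 2 := min_le_right _ _
    have hqt : min t 2 ≤ t := min_le_left _ _
    generalize min t 2 = q at *
    -- With `u = (q - s) / 2`, the claim reduces to `s ≤ q (1 - u) < q exp (-u)`.
    have hexp : 1 - (q - s) / 2 < Real.exp (-((q - s) / 2)) := by
      have := Real.add_one_lt_exp (x := -((q - s) / 2)) (by linarith)
      linarith
    have hlin : s ≤ q * (1 - (q - s) / 2) := by nlinarith
    have hkey : s < q * Real.exp (-((q - s) / 2)) :=
      hlin.trans_lt (mul_lt_mul_of_pos_left hexp (hs.trans hsq))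
    calc s * Real.exp (-(s / 2))
        < q * Real.exp (-((q - s) / 2)) * Real.exp (-(s / 2)) := by gcongr
      _ = q * Real.exp (-(q / 2)) := by
        rw [mul_assoc, ← Real.exp_add]; congr 2; ring
      _ ≤ t * Real.exp (-(q / 2)) := by gcongr

theorem stmt14 (a lam η : ℝ) (ha : 0 < a) (hlam : 0 < lam) (hη : 0 < η) :
    let f : ℝ → ℝ := fun γ =>
      if lam ≤ 2 * η / γ then a * γ * Real.exp (-Real.sqrt (2 * lam * γ / η))
      else a * γ * Real.exp (-2)
    ContinuousOn f (Set.Ioi 0) ∧ StrictMonoOn f (Set.Ioi 0) := by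
  intro f
  have hf : ∀ γ ∈ Set.Ioi (0 : ℝ),
      f γ = a * γ * Real.exp (-min (Real.sqrt (2 * lam * γ / η)) 2) := by
    intro γ hγ
    have hγ : 0 < γ := hγ
    have hiff : lam ≤ 2 * η / γ ↔ Real.sqrt (2 * lam * γ / η) ≤ 2 := by
      rw [Real.sqrt_le_left (by norm_num), le_div_iff₀ hγ, div_le_iff₀ hη]
      constructor <;> intro h <;> linarith
    by_cases h : lam ≤ 2 * η / γ
    · simp only [f, if_pos h, min_eq_left (hiff.1 h)]
    · simp only [f, if_neg h, min_eq_right (not_le.1 (mt hiff.2 h)).le]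
  have hsquare : ∀ γ ∈ Set.Ioi (0 : ℝ), f γ = a * η / (2 * lam) *
      (Real.sqrt (2 * lam * γ / η) *
        Real.exp (-(min (Real.sqrt (2 * lam * γ / η)) 2 / 2))) ^ 2 := by
    intro γ hγ
    have hγ' : 0 < γ := hγ
    rw [hf γ hγ, mul_pow, Real.sq_sqrt (by positivity), ← Real.exp_nat_mul]
    have : ((2 : ℕ) : ℝ) * -(min (Real.sqrt (2 * lam * γ / η)) 2 / 2)
        = -min (Real.sqrt (2 * lam * γ / η)) 2 := by push_cast; ring
    rw [this]
    field_simp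
  constructor
  · refine ContinuousOn.congr (Continuous.continuousOn ?_) hf
    fun_prop
  · intro x hx y hy hxy
    have hx' : 0 < x := hx
    rw [hsquare x hx, hsquare y hy]
    have hlt := mul_exp_neg_min_half_lt (s := Real.sqrt (2 * lam * x / η))
      (t := Real.sqrt (2 * lam * y / η)) (Real.sqrt_pos.2 (by positivity))
      (Real.sqrt_lt_sqrt (by positivity) (by gcongr))
    exact mul_lt_mul_of_pos_left (pow_lt_pow_left₀ hlt (by positivity) (by norm_num))
      (by positivity)
end

section
/- Let λ > 0, a > 0, β ∈ (0,1], θ_max > 0, η > 0, and ε ∈ (0, 1/3). Define g(γ) = λγ e^{−√(2λγ/η)} if γ ≤ 2η/λ and g(γ) = 2η e^{−2} if γ > 2η/λ, and Ω(γ) = λ β θ_max / (a g(γ)). Define the equilibrium Wi-Fi price P(γ) = β θ_max if Ω(γ) ∈ (0, 1/3]; P(γ) = β θ_max/4 + a g(γ)/(4λ) if Ω(γ) ∈ (1/3, 1−2ε); and P(γ) = β θ_max/2 + a g(γ) ε/(2λ) if Ω(γ) ∈ [1−2ε, ∞). Then P is non-decreasing on (0, ∞). -/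
/-!
With `x = min (√(λγ / 2η)) 1`, both branches of the revenue factor read `g(γ) = 2η (x e^{-x})²`.
Since `x ↦ x e^{-x}` is increasing on `[0, 1]` and `x` is non-decreasing in `γ`, so is `g`.

In terms of `B = βθ_max` and `G = a g / λ`, the indicator is `Ω = B / G`, and the price is a
piecewise affine function of `G` with non-negative slopes `ε/2`, `1/4`, `0`, whose pieces agree at
the breakpoints `G = B / (1 - 2ε)` and `G = 3B`. Hence it is non-decreasing in `G`, and so in `γ`.
-/

/-- Monotonicity of `x ↦ x e^{-x}` on `[0, 1]`, by the tangent-line bound `e^{x-y} ≥ 1 + x - y`. -/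
lemma mul_exp_neg_le {x y : ℝ} (hx : 0 ≤ x) (hxy : x ≤ y) (hy : y ≤ 1) :
    x * Real.exp (-x) ≤ y * Real.exp (-y) := by
  have h1 : x - y + 1 ≤ Real.exp (x - y) := Real.add_one_le_exp _
  have h2 : x ≤ y * Real.exp (x - y) := by
    have h3 := mul_le_mul_of_nonneg_left h1 (hx.trans hxy)
    nlinarith [mul_nonneg (sub_nonneg.2 hxy) (sub_nonneg.2 hy)]
  calc x * Real.exp (-x) ≤ y * Real.exp (x - y) * Real.exp (-x) := by gcongr
    _ = y * Real.exp (-y) := by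
      rw [mul_assoc, ← Real.exp_add]
      ring_nf

/-- The two branches of the revenue factor in a single formula. -/
lemma revenue_eq {lam η γ : ℝ} (hlam : 0 < lam) (hη : 0 < η) (hγ : 0 < γ) :
    (if lam ≤ 2 * η / γ then lam * γ * Real.exp (-Real.sqrt (2 * lam * γ / η))
      else 2 * η * Real.exp (-2)) =
    2 * η * (min (Real.sqrt (lam * γ / (2 * η))) 1 *
      Real.exp (-min (Real.sqrt (lam * γ / (2 * η))) 1)) ^ 2 := by
  have hs : Real.sqrt (2 * lam * γ / η) = 2 * Real.sqrt (lam * γ / (2 * η)) := by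
    rw [show 2 * lam * γ / η = 2 ^ 2 * (lam * γ / (2 * η)) by field_simp,
      Real.sqrt_mul (by norm_num), Real.sqrt_sq (by norm_num)]
  have hsq : Real.sqrt (lam * γ / (2 * η)) ^ 2 = lam * γ / (2 * η) :=
    Real.sq_sqrt (by positivity)
  rw [mul_pow, ← Real.exp_nat_mul]
  split_ifs with h
  · rw [le_div_iff₀ hγ] at h
    have h1 : Real.sqrt (lam * γ / (2 * η)) ≤ 1 := by
      rw [Real.sqrt_le_left zero_le_one, one_pow, div_le_one (by positivity)]
      exact h
    rw [min_eq_left h1, hsq, hs]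
    push_cast
    rw [mul_neg]
    field_simp
  · rw [not_le, div_lt_iff₀ hγ] at h
    have h1 : 1 ≤ Real.sqrt (lam * γ / (2 * η)) := by
      rw [Real.one_le_sqrt, one_le_div (by positivity)]
      exact h.le
    rw [min_eq_right h1]
    norm_num

/-- The price is non-decreasing in the normalized revenue factor `G`. -/
lemma price_mono {B ε G H : ℝ} (hB : 0 < B) (hε : 0 < ε) (hε' : ε < 1 / 3)
    (hG : 0 < G) (hGH : G ≤ H) :
    (if B / G ≤ 1 / 3 then B else if B / G < 1 - 2 * ε then B / 4 + G / 4
      else B / 2 + G * ε / 2) ≤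
    (if B / H ≤ 1 / 3 then B else if B / H < 1 - 2 * ε then B / 4 + H / 4
      else B / 2 + H * ε / 2) := by
  have hH : 0 < H := hG.trans_le hGH
  simp only [div_le_iff₀ hG, div_le_iff₀ hH, div_lt_iff₀ hG, div_lt_iff₀ hH]
  split_ifs <;> nlinarith [mul_le_mul_of_nonneg_right hGH hε.le]

theorem stmt16 (lam a β θmax η ε : ℝ) (hlam : 0 < lam) (ha : 0 < a)
    (hβ : β ∈ Set.Ioc (0 : ℝ) 1) (hθ : 0 < θmax) (hη : 0 < η)
    (hε : ε ∈ Set.Ioo (0 : ℝ) (1 / 3)) :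
    let g : ℝ → ℝ := fun γ =>
      if lam ≤ 2 * η / γ then lam * γ * Real.exp (-Real.sqrt (2 * lam * γ / η))
      else 2 * η * Real.exp (-2)
    let Ω : ℝ → ℝ := fun γ => lam * β * θmax / (a * g γ)
    let P : ℝ → ℝ := fun γ =>
      if Ω γ ≤ 1 / 3 then β * θmax
      else if Ω γ < 1 - 2 * ε then β * θmax / 4 + a * g γ / (4 * lam)
      else β * θmax / 2 + a * g γ * ε / (2 * lam)
    MonotoneOn P (Set.Ioi 0) := by
  intro g Ω P x hx y hy hxy
  rw [Set.mem_Ioi] at hx hy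
  have hpos : ∀ γ, 0 < γ → 0 < g γ := by
    intro γ hγ
    simp only [g]
    split_ifs <;> positivity
  have hg : g x ≤ g y := by
    simp only [g]
    rw [revenue_eq hlam hη hx, revenue_eq hlam hη hy]
    gcongr 2 * η * ?_ ^ 2
    exact mul_exp_neg_le (by positivity) (by gcongr) (min_le_right _ _)
  have hP : ∀ γ, 0 < γ → P γ =
      if β * θmax / (a * g γ / lam) ≤ 1 / 3 then β * θmax
      else if β * θmax / (a * g γ / lam) < 1 - 2 * ε then β * θmax / 4 + (a * g γ / lam) / 4
      else β * θmax / 2 + (a * g γ / lam) * ε / 2 := by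
    intro γ hγ
    have := hpos γ hγ
    have h1 : Ω γ = β * θmax / (a * g γ / lam) := by
      simp only [Ω]
      field_simp
    have h2 : a * g γ / (4 * lam) = (a * g γ / lam) / 4 := by field_simp
    have h3 : a * g γ * ε / (2 * lam) = (a * g γ / lam) * ε / 2 := by field_simp
    simp only [P, h1, h2, h3]
  rw [hP x hx, hP y hy]
  have := hpos x hx
  exact price_mono (mul_pos hβ.1 hθ) hε.1 hε.2 (by positivity) (by gcongr)
end

section
/- Let a > 0, γ ∈ (0,1], and η > 0. The function λ ↦ p_a^∞(λ), defined on (0,∞) by p_a^∞(λ) = aγ e^{−√(2λγ/η)} if 0 < λ ≤ 2η/γ and p_a^∞(λ) = aγ e^{−2} if λ > 2η/γ, is continuous and non-increasing on (0,∞); moreover it is strictly decreasing on (0, 2η/γ] and constant on [2η/γ, ∞). -/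
/-!
Write `g x = a γ exp (-√(2 x γ / η))` and `c = 2 η / γ`. Since `2 c γ / η = 4`, the value `g c` is
`a γ exp (-2)`, so the piecewise function is `x ↦ g (min x c)`. As `g` is continuous, and strictly
decreasing on `[0, ∞)`, all the claims follow from properties of `min`.
-/

theorem stmt17 (a γ η : ℝ) (ha : 0 < a) (hγ : γ ∈ Set.Ioc (0 : ℝ) 1) (hη : 0 < η) :
    let f : ℝ → ℝ := fun lam =>
      if lam ≤ 2 * η / γ then a * γ * Real.exp (-Real.sqrt (2 * lam * γ / η))
      else a * γ * Real.exp (-2)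
    ContinuousOn f (Set.Ioi 0) ∧ AntitoneOn f (Set.Ioi 0) ∧
    StrictAntiOn f (Set.Ioc 0 (2 * η / γ)) ∧
    (∀ x ∈ Set.Ici (2 * η / γ), f x = f (2 * η / γ)) := by
  intro f
  have hγ0 : 0 < γ := hγ.1
  set c := 2 * η / γ with hc
  have hc0 : 0 < c := by positivity
  let g : ℝ → ℝ := fun x => a * γ * Real.exp (-Real.sqrt (2 * x * γ / η))
  have hgc : g c = a * γ * Real.exp (-2) := by
    have h4 : 2 * c * γ / η = 2 ^ 2 := by
      rw [hc]; field_simp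
    simp only [g]
    rw [h4, Real.sqrt_sq (by norm_num)]
  have hfg : f = fun x => g (min x c) := by
    funext x
    by_cases hx : x ≤ c
    · rw [min_eq_left hx]
      exact if_pos hx
    · rw [min_eq_right (not_le.mp hx).le, hgc]
      exact if_neg hx
  have hg : Continuous g := by fun_prop
  have hganti : StrictAntiOn g (Set.Ici 0) := by
    intro x hx y _ hxy
    have hx0 : 0 ≤ x := hx
    have hs : Real.sqrt (2 * x * γ / η) < Real.sqrt (2 * y * γ / η) :=
      Real.sqrt_lt_sqrt (by positivity) (by gcongr)
    exact mul_lt_mul_of_pos_left (Real.exp_lt_exp.mpr (neg_lt_neg hs)) (mul_pos ha hγ0)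
  rw [hfg]
  refine ⟨(hg.comp (continuous_id.min continuous_const)).continuousOn, ?_, ?_, ?_⟩
  · intro x hx y hy hxy
    exact hganti.antitoneOn (le_min (le_of_lt hx) hc0.le) (le_min (le_of_lt hy) hc0.le)
      (min_le_min_right c hxy)
  · intro x hx y hy hxy
    simp only [min_eq_left hx.2, min_eq_left hy.2]
    exact hganti hx.1.le hy.1.le hxy
  · intro x hx
    simp only [min_eq_right (Set.mem_Ici.mp hx), min_self]
end

section
/- Let a > 0, γ ∈ (0,1], β ∈ (0,1], θ_max > 0, η > 0, and ε ∈ (0, 1/3). Define g(λ) = λγ e^{−√(2λγ/η)} if 0 < λ ≤ 2η/γ and g(λ) = 2η e^{−2} if λ > 2η/γ, and Ω(λ) = λ β θ_max / (a g(λ)). Define the equilibrium Wi-Fi price P(λ) = β θ_max if Ω(λ) ∈ (0, 1/3]; P(λ) = β θ_max/4 + a g(λ)/(4λ) if Ω(λ) ∈ (1/3, 1−2ε); and P(λ) = β θ_max/2 + a g(λ) ε/(2λ) if Ω(λ) ∈ [1−2ε, ∞). Then Ω is continuous and strictly increasing on (0,∞) with lim_{λ→0⁺} Ω(λ) = β θ_max/(aγ)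 and lim_{λ→∞} Ω(λ) = ∞, and P is non-increasing on (0, ∞). -/
/-!
Put `t = λγ/(2η)`. For `λ > 0` the two branches of `g` combine into the single formula
`Ω λ = βθ/(aγ) · E t` with `E t = exp (2 √(min t 1)) · max t 1`: below the threshold `t = 1` only
the exponential varies, above it only the linear factor does. `E` is continuous on all of `ℝ`,
equals `1` at `0`, dominates `t`, and is strictly increasing on `[0, ∞)`, which gives every claim
about `Ω`. Since `a g λ / λ = βθ / Ω λ`, the price depends on `λ` only through `Ω`: it is `βθ`
times the function `priceShape ε` of `Ω`. The pieces of `priceShape ε` are constant or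
decreasing and agree at the breakpoints `1/3` and `1 - 2ε`, so it is antitone on `(0, ∞)`; composing
with the increasing `Ω` shows that the price is non-increasing.
-/

/-- The equilibrium indicator up to scaling, as a function of the rescaled visiting frequency
`t = λγ/(2η)`; the threshold between the two branches of `g` sits at `t = 1`. -/
noncomputable def indicatorShape (t : ℝ) : ℝ :=
  Real.exp (2 * Real.sqrt (min t 1)) * max t 1

lemma continuous_indicatorShape : Continuous indicatorShape := by
  unfold indicatorShape
  fun_prop

lemma indicatorShape_pos (t : ℝ) : 0 < indicatorShape t :=
  mul_pos (Real.exp_pos _) (lt_of_lt_of_le one_pos (le_max_right t 1))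

lemma le_indicatorShape (t : ℝ) : t ≤ indicatorShape t := by
  have h1 : 1 ≤ Real.exp (2 * Real.sqrt (min t 1)) := Real.one_le_exp (by positivity)
  have h2 : 0 ≤ max t 1 := zero_le_one.trans (le_max_right t 1)
  exact (le_max_left t 1).trans (le_mul_of_one_le_left h2 h1)

lemma indicatorShape_zero : indicatorShape 0 = 1 := by
  simp [indicatorShape]

lemma indicatorShape_strictMonoOn : StrictMonoOn indicatorShape (Set.Ici 0) := by
  intro x hx y _ hxy
  have hx0 : (0 : ℝ) ≤ x := hx
  unfold indicatorShape
  rcases lt_or_ge x 1 with h | h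
  · -- Below the threshold the exponential factor increases strictly.
    have h1 : Real.sqrt (min x 1) < Real.sqrt (min y 1) := by
      apply Real.sqrt_lt_sqrt
      · exact le_min hx0 zero_le_one
      · rw [min_eq_left h.le]
        exact lt_min hxy h
    have h2 : Real.exp (2 * Real.sqrt (min x 1)) < Real.exp (2 * Real.sqrt (min y 1)) :=
      Real.exp_lt_exp.2 (by linarith)
    exact mul_lt_mul h2 (max_le_max_right 1 hxy.le)
      (lt_of_lt_of_le one_pos (le_max_right x 1)) (Real.exp_pos _).le
  · -- Above the threshold the exponential factor is constant and the linear one increases.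
    rw [min_eq_right h, min_eq_right (h.trans hxy.le), max_eq_left h,
      max_eq_left (h.trans hxy.le)]
    exact mul_lt_mul_of_pos_left hxy (Real.exp_pos _)

/-- The equilibrium price divided by `βθ`, as a function of the equilibrium indicator `x`. -/
noncomputable def priceShape (ε x : ℝ) : ℝ :=
  if x ≤ 1 / 3 then 1 else if x < 1 - 2 * ε then 1 / 4 + 1 / (4 * x) else 1 / 2 + ε / (2 * x)

/-- On `(0, ∞)` the branches agree at `1/3` and `1 - 2ε`; the cross-branch comparisons below are
these matchings combined with the monotonicity of `1 / x`. -/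
lemma priceShape_antitoneOn {ε : ℝ} (h0 : 0 < ε) (h1 : ε < 1 / 3) :
    AntitoneOn (priceShape ε) (Set.Ioi 0) := by
  intro x hx y hy hxy
  have hx0 : (0 : ℝ) < x := hx
  have hy0 : (0 : ℝ) < y := hy
  have hinv : y⁻¹ ≤ x⁻¹ := inv_anti₀ hx0 hxy
  have ey : 1 / (4 * y) = y⁻¹ / 4 := by field_simp
  have ex : 1 / (4 * x) = x⁻¹ / 4 := by field_simp
  have fy : ε / (2 * y) = ε * y⁻¹ / 2 := by field_simp
  have fx : ε / (2 * x) = ε * x⁻¹ / 2 := by field_simp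
  have hxx : x * x⁻¹ = 1 := mul_inv_cancel₀ hx0.ne'
  have hyy : y * y⁻¹ = 1 := mul_inv_cancel₀ hy0.ne'
  have hxi : 0 < x⁻¹ := inv_pos.2 hx0
  have hyi : 0 < y⁻¹ := inv_pos.2 hy0
  unfold priceShape
  rw [ey, ex, fy, fx]
  split_ifs
  all_goals first | linarith | nlinarith

theorem stmt19 (a γ β θmax η ε : ℝ) (ha : 0 < a) (hγ : γ ∈ Set.Ioc (0 : ℝ) 1)
    (hβ : β ∈ Set.Ioc (0 : ℝ) 1) (hθ : 0 < θmax) (hη : 0 < η)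
    (hε : ε ∈ Set.Ioo (0 : ℝ) (1 / 3)) :
    let g : ℝ → ℝ := fun lam =>
      if lam ≤ 2 * η / γ then lam * γ * Real.exp (-Real.sqrt (2 * lam * γ / η))
      else 2 * η * Real.exp (-2)
    let Ω : ℝ → ℝ := fun lam => lam * β * θmax / (a * g lam)
    let P : ℝ → ℝ := fun lam =>
      if Ω lam ≤ 1 / 3 then β * θmax
      else if Ω lam < 1 - 2 * ε then β * θmax / 4 + a * g lam / (4 * lam)
      else β * θmax / 2 + a * g lam * ε / (2 * lam)
    ContinuousOn Ω (Set.Ioi 0) ∧ StrictMonoOn Ω (Set.Ioi 0) ∧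
    Filter.Tendsto Ω (nhdsWithin 0 (Set.Ioi 0)) (nhds (β * θmax / (a * γ))) ∧
    Filter.Tendsto Ω Filter.atTop Filter.atTop ∧
    AntitoneOn P (Set.Ioi 0) := by
  intro g Ω P
  obtain ⟨hγ0, -⟩ := hγ
  obtain ⟨hβ0, -⟩ := hβ
  obtain ⟨hε0, hε1⟩ := hε
  have hg : ∀ l, 0 < l → 0 < g l := by
    intro l hl
    simp only [g]
    split_ifs <;> positivity
  have hK : 0 < β * θmax / (a * γ) := by positivity
  have hr : 0 < γ / (2 * η) := by positivity
  have hΩ : ∀ l, 0 < l →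
      Ω l = β * θmax / (a * γ) * indicatorShape (γ / (2 * η) * l) := by
    intro l hl
    simp only [Ω, g, indicatorShape]
    split_ifs with h
    · have ht : γ / (2 * η) * l ≤ 1 := by
        rw [le_div_iff₀ hγ0] at h
        rw [div_mul_eq_mul_div, div_le_one (by positivity)]
        linarith
      have hs : Real.sqrt (2 * l * γ / η) = 2 * Real.sqrt (γ / (2 * η) * l) := by
        rw [show 2 * l * γ / η = 2 ^ 2 * (γ / (2 * η) * l) by field_simp,
          Real.sqrt_mul (by positivity), Real.sqrt_sq (by norm_num)]
      rw [min_eq_left ht, max_eq_right ht, hs, Real.exp_neg]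
      field_simp
    · have ht : 1 ≤ γ / (2 * η) * l := by
        rw [not_le, div_lt_iff₀ hγ0] at h
        rw [div_mul_eq_mul_div, one_le_div (by positivity)]
        linarith
      rw [min_eq_right ht, max_eq_left ht, Real.sqrt_one, Real.exp_neg, mul_one]
      field_simp
  have hΩpos : ∀ l, 0 < l → 0 < Ω l := by
    intro l hl
    rw [hΩ l hl]
    exact mul_pos hK (indicatorShape_pos _)
  have hcont : Continuous
      (fun l : ℝ => β * θmax / (a * γ) * indicatorShape (γ / (2 * η) * l)) :=
    continuous_const.mul (continuous_indicatorShape.comp (continuous_const.mul continuous_id))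
  have hmono : StrictMonoOn Ω (Set.Ioi 0) := by
    intro x hx y hy hxy
    rw [hΩ x hx, hΩ y hy]
    exact mul_lt_mul_of_pos_left
      (indicatorShape_strictMonoOn (mul_pos hr hx).le (mul_pos hr hy).le
        (mul_lt_mul_of_pos_left hxy hr)) hK
  refine ⟨hcont.continuousOn.congr fun l hl => hΩ l hl, hmono, ?_, ?_, ?_⟩
  · have h0 := (hcont.tendsto 0).mono_left (nhdsWithin_le_nhds (s := Set.Ioi 0))
    rw [mul_zero, indicatorShape_zero, mul_one] at h0
    refine h0.congr' ?_
    filter_upwards [self_mem_nhdsWithin] with l hl using (hΩ l hl).symm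
  · have hlin : Filter.Tendsto (fun l : ℝ => β * θmax / (a * γ) * (γ / (2 * η) * l))
        Filter.atTop Filter.atTop :=
      (Filter.tendsto_id.const_mul_atTop hr).const_mul_atTop hK
    refine Filter.tendsto_atTop_mono' _ ?_ hlin
    filter_upwards [Filter.eventually_gt_atTop 0] with l hl
    rw [hΩ l hl]
    exact mul_le_mul_of_nonneg_left (le_indicatorShape _) hK.le
  · have hP : ∀ l, 0 < l → P l = β * θmax * priceShape ε (Ω l) := by
      intro l hl
      have hgl : a * g l = l * β * θmax / Ω l := by
        have := hg l hl
        simp only [Ω]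
        field_simp
      have := hΩpos l hl
      simp only [P, priceShape]
      rw [hgl]
      split_ifs
      · ring
      · field_simp
      · field_simp
    intro x hx y hy hxy
    rw [hP x hx, hP y hy]
    exact mul_le_mul_of_nonneg_left
      (priceShape_antitoneOn hε0 hε1 (hΩpos x hx) (hΩpos y hy) (hmono.monotoneOn hx hy hxy))
      (by positivity)
end
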